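/- On V = F_{q²} ⊗ F_q ⊗ F_{q²} ⊗ F_q define the operators ξ₂ = (1−q⁴)⁻¹ (A⁺K⁻¹ ⊗ 1 ⊗ 1 ⊗ 1) and ξ₁ = (1−q²)⁻¹ (A⁻ ⊗ a⁺k⁻¹ ⊗ 1 ⊗ 1 + K ⊗ a⁻k⁻¹ ⊗ A⁺K⁻¹ ⊗ 1 + K ⊗ 1 ⊗ K⁻¹ ⊗ a⁺k⁻¹). In the renormalized basis |a,b,c,d⟩⟩ = D_a d_b D_c d_d |a⟩⊗|b⟩⊗|c⟩⊗|d⟩, where d_m = q^{−m(m−1)/2}(1−q²)^{−m} and D_m = q^{−m(m−1)}(1−q⁴)^{−m}, these satisfy ξ₂|a,b,c,d⟩⟩ = |a+1,b,c,d⟩⟩ and ξ₁|a,b,c,d⟩⟩ = [2]₁[b]₁ q^{2a−b+1} |a,b−1,c+1,d⟩⟩ + q^{2a−2c} |a,b,c,d+1⟩⟩ + [a]₂ |a−1,b+1,c,d⟩⟩ for all a,b,c,d ∈ ℕ (terms with a negative index are absent since their coefficients vanish). In particular ξ₁, ξ₂ act on the renormalized basis by exactly the same structure constants as left multiplication by e₁,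 e₂ on the PBW monomials b₁^a b₂^b b₃^c b₄^d of U_q⁺(C₂). -/

import Mathlib

noncomputable section

/-- The base field `K = ℚ(q)`, rational functions over `ℚ`. -/
abbrev K : Type := RatFunc ℚ

/-- The indeterminate `q`. -/
def q : K := RatFunc.X

/-- `⟨m⟩ = q^m − q^{−m}`. -/
def qbra (m : ℕ) : K := q ^ m - q⁻¹ ^ m

/-- `[m]₁ = ⟨m⟩/⟨1⟩`. -/
def qn1 (m : ℕ) : K := qbra m / qbra 1

/-- `[m]₂ = ⟨2m⟩/⟨2⟩`. -/
def qn2 (m : ℕ) : K := qbra (2 * m) / qbra 2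

/-- The Fock space with basis `|m⟩, m ∈ ℕ` (underlying both `F_q` and `F_{q²}`). -/
abbrev F : Type := ℕ →₀ K

/-- The basis vector `|m⟩`. -/
def ket (m : ℕ) : F := Finsupp.single m 1

/-- On `F_q`, the operator `k : |m⟩ ↦ q^m |m⟩`. -/
def opK : Module.End K F := Finsupp.lift F K ℕ fun m => (q ^ m) • ket m

/-- The inverse `k⁻¹ : |m⟩ ↦ q^{−m} |m⟩`. -/
def opKInv : Module.End K F := Finsupp.lift F K ℕ fun m => (q ^ m)⁻¹ • ket m

/-- The raising operator `a⁺ = A⁺ : |m⟩ ↦ |m+1⟩`. -/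
def opAp : Module.End K F := Finsupp.lift F K ℕ fun m => ket (m + 1)

/-- On `F_q`, the lowering operator `a⁻ : |m⟩ ↦ (1 − q^{2m}) |m-1⟩` (killing `|0⟩`). -/
def opAm : Module.End K F := Finsupp.lift F K ℕ fun m => (1 - q ^ (2 * m)) • ket (m - 1)

/-- On `F_{q²}`, the operator `K : |m⟩ ↦ q^{2m} |m⟩`. -/
def opK2 : Module.End K F := Finsupp.lift F K ℕ fun m => (q ^ (2 * m)) • ket m

/-- The inverse `K⁻¹ : |m⟩ ↦ q^{−2m} |m⟩`. -/
def opK2Inv : Module.End K F := Finsupp.lift F K ℕ fun m => (q ^ (2 * m))⁻¹ • ket m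

/-- On `F_{q²}`, the lowering operator `A⁻ : |m⟩ ↦ (1 − q^{4m}) |m-1⟩` (killing `|0⟩`). -/
def opAm2 : Module.End K F := Finsupp.lift F K ℕ fun m => (1 - q ^ (4 * m)) • ket (m - 1)

open TensorProduct

/-- The tensor product `V = F_{q²} ⊗ F_q ⊗ F_{q²} ⊗ F_q`. -/
abbrev V4 : Type := F ⊗[K] (F ⊗[K] (F ⊗[K] F))

instance : AddCommGroup (F ⊗[K] (F ⊗[K] F)) := by
  exact @TensorProduct.addCommGroup K _ F (F ⊗[K] F) _ _ _ _

instance : AddCommGroup V4 := by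
  exact @TensorProduct.addCommGroup K _ F (F ⊗[K] (F ⊗[K] F)) _ _ _ _

/-- `f ⊗ g ⊗ h ⊗ i` as an operator on `V`. -/
def tens4 (f g h i : Module.End K F) : Module.End K V4 :=
  TensorProduct.map f (TensorProduct.map g (TensorProduct.map h i))

/-- The operator `ξ₂ = (1−q⁴)⁻¹ (A⁺K⁻¹ ⊗ 1 ⊗ 1 ⊗ 1)`. -/
def xi2 : Module.End K V4 := (1 - q ^ 4)⁻¹ • tens4 (opAp * opK2Inv) 1 1 1

/-- The operator
`ξ₁ = (1−q²)⁻¹ (A⁻ ⊗ a⁺k⁻¹ ⊗ 1 ⊗ 1 + K ⊗ a⁻k⁻¹ ⊗ A⁺K⁻¹ ⊗ 1 + K ⊗ 1 ⊗ K⁻¹ ⊗ a⁺k⁻¹)`. -/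
def xi1 : Module.End K V4 :=
  (1 - q ^ 2)⁻¹ •
    (tens4 opAm2 (opAp * opKInv) 1 1
      + tens4 opK2 (opAm * opKInv) (opAp * opK2Inv) 1
      + tens4 opK2 1 opK2Inv (opAp * opKInv))

/-- The renormalization factor `d_m = q^{−m(m−1)/2}(1−q²)^{−m}`. -/
def dsm (m : ℕ) : K := (q ^ (m * (m - 1) / 2) * (1 - q ^ 2) ^ m)⁻¹

/-- The renormalization factor `D_m = q^{−m(m−1)}(1−q⁴)^{−m}`. -/
def dbig (m : ℕ) : K := (q ^ (m * (m - 1)) * (1 - q ^ 4) ^ m)⁻¹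

/-- The renormalized basis vector `|a,b,c,d⟩⟩ = D_a d_b D_c d_d |a⟩⊗|b⟩⊗|c⟩⊗|d⟩`. -/
def kett (a b c d : ℕ) : V4 :=
  (dbig a * dsm b * dbig c * dsm d) • (ket a ⊗ₜ[K] (ket b ⊗ₜ[K] (ket c ⊗ₜ[K] ket d)))

/-!
The vectors `|a,b,c,d⟩⟩` are pure tensors of the one-site vectors `d_m |m⟩` at `p = q` and `p = q²`
(`d_m` at `p = q²` is `D_m`). At one site the factor `d_m` is exactly what makes `a⁺k⁻¹` a shift up
to the constant `1 - p²` and turns the coefficient `1 - p^{2m}` of the lowering operator into the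
`q`-number `[m]` at `p`. Only the middle term of `ξ₁` raises an `F_{q²}` site, and the resulting
quotient `(1 - q⁴) / (1 - q²) = q [2]₁` is the origin of the coefficient `[2]₁`.
-/

section Scalars

variable {L : Type*} [Field L]

/-- The `q`-number `[m] = (p^m - p^{-m}) / (p - p⁻¹)` at the parameter `p`; it gives `[m]₁` for
`p = q` and `[m]₂` for `p = q²`. -/
def qNumber (p : L) (m : ℕ) : L := (p ^ m - p⁻¹ ^ m) / (p - p⁻¹)

/-- The renormalization factor `p^{-m(m-1)/2} (1 - p²)^{-m}` of `|m⟩` in the Fock space `F_p`; it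
gives `d_m` for `p = q` and `D_m` for `p = q²`. -/
def fockFactor (p : L) (m : ℕ) : L := (p ^ m.choose 2 * (1 - p ^ 2) ^ m)⁻¹

lemma fockFactor_succ (p : L) (m : ℕ) :
    fockFactor p (m + 1) = (p ^ m * (1 - p ^ 2))⁻¹ * fockFactor p m := by
  have hchoose : (m + 1).choose 2 = m + m.choose 2 := by
    rw [Nat.choose_succ_succ', Nat.choose_one_right]
  rw [fockFactor, fockFactor, hchoose, ← mul_inv]
  ring

lemma qNumber_succ {p : L} (hp : p ≠ 0) (m : ℕ) :
    qNumber p (m + 1) = (1 - p ^ (2 * (m + 1))) * (p ^ m * (1 - p ^ 2))⁻¹ := by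
  have hnum : p ^ (m + 1) - p⁻¹ ^ (m + 1) = (1 - p ^ (2 * (m + 1))) * -(p ^ (m + 1))⁻¹ := by
    rw [inv_pow]
    field_simp
    ring
  have hden : p - p⁻¹ = (1 - p ^ 2) * -p⁻¹ := by
    field_simp
    ring
  rw [qNumber, hnum, hden]
  field_simp
  ring

lemma one_sub_sq_mul_qNumber_two {p : L} (hp : p ≠ 0) (hp2 : 1 - p ^ 2 ≠ 0) :
    (1 - p ^ 2) * (qNumber p 2 * p) = 1 - p ^ 4 := by
  rw [qNumber_succ hp 1]
  field_simp

lemma one_sub_pow_mul_fockFactor {p : L} (hp : p ≠ 0) (m : ℕ) :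
    (1 - p ^ (2 * m)) * fockFactor p m = qNumber p m * fockFactor p (m - 1) := by
  cases m with
  | zero => simp [qNumber]
  | succ n => rw [fockFactor_succ, qNumber_succ hp, Nat.add_sub_cancel, mul_assoc]

end Scalars

lemma q_ne_zero : q ≠ 0 := RatFunc.X_ne_zero

lemma one_sub_q_pow_ne_zero {n : ℕ} (hn : n ≠ 0) : 1 - q ^ n ≠ 0 := by
  intro h
  have hX : (Polynomial.X : Polynomial ℚ) ^ n = 1 := by
    apply RatFunc.algebraMap_injective ℚ
    rw [map_pow, map_one, RatFunc.algebraMap_X]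
    exact (sub_eq_zero.mp h).symm
  exact hn (by simpa using congrArg Polynomial.natDegree hX)

lemma qn1_eq_qNumber (m : ℕ) : qn1 m = qNumber q m := by
  rw [qn1, qbra, qbra, qNumber, pow_one, pow_one]

lemma qn2_eq_qNumber (m : ℕ) : qn2 m = qNumber (q ^ 2) m := by
  rw [qn2, qbra, qbra, qNumber, pow_mul, pow_mul, inv_pow]

lemma dsm_eq_fockFactor (m : ℕ) : dsm m = fockFactor q m := by
  rw [dsm, fockFactor, Nat.choose_two_right]

lemma dbig_eq_fockFactor (m : ℕ) : dbig m = fockFactor (q ^ 2) m := by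
  have hchoose : m * (m - 1) = 2 * m.choose 2 := by
    rw [Nat.choose_two_right, Nat.mul_div_cancel' (Nat.even_mul_pred_self m).two_dvd]
  rw [dbig, fockFactor, hchoose, pow_mul, ← pow_mul q 2 2]

lemma one_sub_q_sq_mul_qn1_two : (1 - q ^ 2) * (qn1 2 * q) = 1 - q ^ 4 := by
  rw [qn1_eq_qNumber, one_sub_sq_mul_qNumber_two q_ne_zero (one_sub_q_pow_ne_zero two_ne_zero)]

/-- The renormalized basis vector of the Fock space `F_p`: `d_m |m⟩` for `p = q` and `D_m |m⟩` for
`p = q²`. -/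
def fockVec (p : K) (m : ℕ) : F := fockFactor p m • ket m

lemma lift_ket (f : ℕ → F) (m : ℕ) : Finsupp.lift F K ℕ f (ket m) = f m := by
  simp [ket]

lemma one_apply_fockVec (p : K) (m : ℕ) :
    (1 : Module.End K F) (fockVec p m) = (1 : K) • fockVec p m := by
  rw [Module.End.one_apply, one_smul]

lemma opKInv_fockVec (p : K) (m : ℕ) : opKInv (fockVec p m) = (q ^ m)⁻¹ • fockVec p m := by
  rw [fockVec, map_smul, opKInv, lift_ket, smul_comm]

lemma opK2_fockVec (p : K) (m : ℕ) : opK2 (fockVec p m) = q ^ (2 * m) • fockVec p m := by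
  rw [fockVec, map_smul, opK2, lift_ket, smul_comm]

lemma opK2Inv_fockVec (p : K) (m : ℕ) :
    opK2Inv (fockVec p m) = (q ^ (2 * m))⁻¹ • fockVec p m := by
  rw [fockVec, map_smul, opK2Inv, lift_ket, smul_comm]

lemma opAp_fockVec {p : K} (hp : p ≠ 0) (hp2 : 1 - p ^ 2 ≠ 0) (m : ℕ) :
    opAp (fockVec p m) = (p ^ m * (1 - p ^ 2)) • fockVec p (m + 1) := by
  rw [fockVec, fockVec, map_smul, opAp, lift_ket, fockFactor_succ, smul_smul,
    mul_inv_cancel_left₀ (mul_ne_zero (pow_ne_zero m hp) hp2)]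

lemma opAm_fockVec (m : ℕ) : opAm (fockVec q m) = qn1 m • fockVec q (m - 1) := by
  rw [fockVec, fockVec, map_smul, opAm, lift_ket, smul_smul, smul_smul, mul_comm,
    one_sub_pow_mul_fockFactor q_ne_zero, qn1_eq_qNumber]

lemma opAm2_fockVec (m : ℕ) :
    opAm2 (fockVec (q ^ 2) m) = qn2 m • fockVec (q ^ 2) (m - 1) := by
  have hpow : q ^ (4 * m) = (q ^ 2) ^ (2 * m) := by
    rw [← pow_mul]
    ring
  rw [fockVec, fockVec, map_smul, opAm2, lift_ket, smul_smul, smul_smul, mul_comm, hpow,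
    one_sub_pow_mul_fockFactor (pow_ne_zero 2 q_ne_zero), qn2_eq_qNumber]

lemma opAp_mul_opKInv_fockVec (m : ℕ) :
    (opAp * opKInv) (fockVec q m) = (1 - q ^ 2) • fockVec q (m + 1) := by
  rw [Module.End.mul_apply, opKInv_fockVec, map_smul,
    opAp_fockVec q_ne_zero (one_sub_q_pow_ne_zero two_ne_zero), smul_smul,
    inv_mul_cancel_left₀ (pow_ne_zero m q_ne_zero)]

lemma opAp_mul_opK2Inv_fockVec (m : ℕ) :
    (opAp * opK2Inv) (fockVec (q ^ 2) m) = (1 - q ^ 4) • fockVec (q ^ 2) (m + 1) := by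
  have hq4 : (q ^ 2) ^ 2 = q ^ 4 := by rw [← pow_mul]
  have hne : 1 - (q ^ 2) ^ 2 ≠ 0 := hq4 ▸ one_sub_q_pow_ne_zero four_ne_zero
  rw [Module.End.mul_apply, opK2Inv_fockVec, map_smul,
    opAp_fockVec (pow_ne_zero 2 q_ne_zero) hne, smul_smul, pow_mul q 2 m,
    inv_mul_cancel_left₀ (pow_ne_zero m (pow_ne_zero 2 q_ne_zero)), hq4]

lemma opAm_mul_opKInv_fockVec (m : ℕ) :
    (opAm * opKInv) (fockVec q m) = ((q ^ m)⁻¹ * qn1 m) • fockVec q (m - 1) := by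
  rw [Module.End.mul_apply, opKInv_fockVec, map_smul, opAm_fockVec, smul_smul]

lemma kett_eq_tmul_fockVec (a b c d : ℕ) :
    kett a b c d =
      fockVec (q ^ 2) a ⊗ₜ[K] (fockVec q b ⊗ₜ[K] (fockVec (q ^ 2) c ⊗ₜ[K] fockVec q d)) := by
  simp only [kett, fockVec, dbig_eq_fockFactor, dsm_eq_fockFactor, tmul_smul, ← smul_tmul',
    smul_smul]
  congr 1
  ring

lemma tens4_kett {f g h i : Module.End K F} {a b c d a' b' c' d' : ℕ} {r s t u : K}
    (hf : f (fockVec (q ^ 2) a) = r • fockVec (q ^ 2) a')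
    (hg : g (fockVec q b) = s • fockVec q b')
    (hh : h (fockVec (q ^ 2) c) = t • fockVec (q ^ 2) c')
    (hi : i (fockVec q d) = u • fockVec q d') :
    tens4 f g h i (kett a b c d) = (r * s * t * u) • kett a' b' c' d' := by
  simp only [kett_eq_tmul_fockVec, tens4, map_tmul, hf, hg, hh, hi, tmul_smul, ← smul_tmul',
    smul_smul]
  congr 1
  ring

lemma xi2_kett (a b c d : ℕ) : xi2 (kett a b c d) = kett (a + 1) b c d := by
  have hraise : tens4 (opAp * opK2Inv) 1 1 1 (kett a b c d) =
      (1 - q ^ 4) • kett (a + 1) b c d := by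
    simpa only [mul_one] using tens4_kett (opAp_mul_opK2Inv_fockVec a) (one_apply_fockVec _ b)
      (one_apply_fockVec _ c) (one_apply_fockVec _ d)
  rw [xi2, LinearMap.smul_apply, hraise, inv_smul_smul₀ (one_sub_q_pow_ne_zero four_ne_zero)]

lemma tens4_opAm2_opAp_kett (a b c d : ℕ) :
    tens4 opAm2 (opAp * opKInv) 1 1 (kett a b c d) =
      (1 - q ^ 2) • qn2 a • kett (a - 1) (b + 1) c d := by
  rw [tens4_kett (opAm2_fockVec a) (opAp_mul_opKInv_fockVec b) (one_apply_fockVec _ c)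
    (one_apply_fockVec _ d), smul_smul]
  congr 1
  ring

lemma tens4_opAm_opAp_kett (a b c d : ℕ) :
    tens4 opK2 (opAm * opKInv) (opAp * opK2Inv) 1 (kett a b c d) =
      (1 - q ^ 2) • (qn1 2 * qn1 b * q ^ (2 * (a : ℤ) - b + 1)) • kett a (b - 1) (c + 1) d := by
  have hpow : q ^ (2 * (a : ℤ) - b + 1) = q ^ (2 * a) * (q ^ b)⁻¹ * q := by
    rw [zpow_add_one₀ q_ne_zero, zpow_sub₀ q_ne_zero, div_eq_mul_inv]
    norm_cast
  rw [tens4_kett (opK2_fockVec _ a) (opAm_mul_opKInv_fockVec b) (opAp_mul_opK2Inv_fockVec c)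
    (one_apply_fockVec _ d), smul_smul, ← one_sub_q_sq_mul_qn1_two, hpow]
  congr 1
  ring

lemma tens4_opK2Inv_opAp_kett (a b c d : ℕ) :
    tens4 opK2 1 opK2Inv (opAp * opKInv) (kett a b c d) =
      (1 - q ^ 2) • q ^ (2 * (a : ℤ) - 2 * c) • kett a b c (d + 1) := by
  have hpow : q ^ (2 * (a : ℤ) - 2 * c) = q ^ (2 * a) * (q ^ (2 * c))⁻¹ := by
    rw [zpow_sub₀ q_ne_zero, div_eq_mul_inv]
    norm_cast
  rw [tens4_kett (opK2_fockVec _ a) (one_apply_fockVec _ b) (opK2Inv_fockVec _ c)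
    (opAp_mul_opKInv_fockVec d), smul_smul, hpow]
  congr 1
  ring

/-- the action of `ξ₁, ξ₂` on the renormalized basis reproduces the
structure constants of left multiplication by `e₁, e₂` on the PBW monomials
`b₁^a b₂^b b₃^c b₄^d` of `U_q⁺(C₂)`.  (Terms with a negative index appear with
vanishing coefficient, so truncated subtraction on `ℕ` realizes the convention.) -/
theorem statement14 (a b c d : ℕ) :
    xi2 (kett a b c d) = kett (a + 1) b c d ∧
    xi1 (kett a b c d)
      = (qn1 2 * qn1 b * q ^ (2 * (a : ℤ) - b + 1)) • kett a (b - 1) (c + 1) d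
        + (q ^ (2 * (a : ℤ) - 2 * c)) • kett a b c (d + 1)
        + qn2 a • kett (a - 1) (b + 1) c d := by
  refine ⟨xi2_kett a b c d, ?_⟩
  rw [xi1, LinearMap.smul_apply, LinearMap.add_apply, LinearMap.add_apply,
    tens4_opAm2_opAp_kett, tens4_opAm_opAp_kett, tens4_opK2Inv_opAp_kett, ← smul_add, ← smul_add,
    inv_smul_smul₀ (one_sub_q_pow_ne_zero two_ne_zero)]
  abel
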